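/- arXiv:1012.5152 — 2 statements merged into one kernel-verified Lean document; each statement's English description precedes it below -/
import Mathlib

section
/- Let φ : Σ_A → ℝ be d-Hölder continuous and let L_φ be the Perron–Frobenius–Ruelle operator, (L_φ f)(ω) := Σ_{υ ∈ Σ_A, σ(υ) = ω} e^{φ(υ)} f(υ) for continuous f : Σ_A → ℝ. Then there exist a unique real number λ > 0 and a unique Borel probability measure μ on Σ_A such that ∫_{Σ_A} L_φ f dμ = λ ∫_{Σ_A} f dμ for every continuous f : Σ_A → ℝ; moreover this μ is a Gibbs measure for φ with pressure P = ln λ. -/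
open MeasureTheory Filter
open scoped ENNReal NNReal

namespace SFT

variable {l : ℕ}

/-- The one-sided subshift of finite type determined by the `l × l` matrix `A`:
infinite sequences with transitions allowed by `A`. -/
abbrev SigmaA (l : ℕ) (A : Matrix (Fin l) (Fin l) ℕ) : Type :=
  {ω : ℕ → Fin l // ∀ k, A (ω k) (ω (k + 1)) = 1}

/-- The left shift `σ` on `SigmaA l A`. -/
def shift {A : Matrix (Fin l) (Fin l) ℕ} (ω : SigmaA l A) : SigmaA l A :=
  ⟨fun n => ω.1 (n + 1), fun k => ω.2 (k + 1)⟩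

/-- Birkhoff sums `S_k φ = ∑_{m<k} φ ∘ σ^m`. -/
def birkhoff {A : Matrix (Fin l) (Fin l) ℕ} (φ : SigmaA l A → ℝ) (k : ℕ) (ω : SigmaA l A) : ℝ :=
  ∑ m ∈ Finset.range k, φ (shift^[m] ω)

/-- The matrix `A` has `0`-`1` entries and is irreducible and aperiodic
(some power of `A` has all entries strictly positive). -/
def Primitive (A : Matrix (Fin l) (Fin l) ℕ) : Prop :=
  (∀ i j, A i j = 0 ∨ A i j = 1) ∧ ∃ n : ℕ, 0 < n ∧ ∀ i j, 0 < (A ^ n) i j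

/-- A finite word is admissible, i.e. belongs to `Σ_A^*`. -/
def Admissible (A : Matrix (Fin l) (Fin l) ℕ) (x : List (Fin l)) : Prop :=
  x ≠ [] ∧ ∀ (i : ℕ) (h : i + 1 < x.length), A (x[i]'(by omega)) (x[i + 1]'h) = 1

/-- The cylinder set `[x]` of a finite word (the empty word gives all of `Σ_A`). -/
def cylinder (A : Matrix (Fin l) (Fin l) ℕ) (x : List (Fin l)) : Set (SigmaA l A) :=
  {ω | ∀ (i : ℕ) (h : i < x.length), ω.1 i = x[i]'h}

/-- The initial word `(ω_1, …, ω_k)` of `ω`. -/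
def wordPrefix {A : Matrix (Fin l) (Fin l) ℕ} (ω : SigmaA l A) (k : ℕ) : List (Fin l) :=
  List.ofFn (fun i : Fin k => ω.1 i)

/-- `μ` is a Gibbs measure for the potential `φ` with pressure `P`:
`c⁻¹ ≤ μ([ω_1,…,ω_k]) / exp(S_kφ(ω) − kP) ≤ c` for some `c > 1`. -/
def IsGibbs {A : Matrix (Fin l) (Fin l) ℕ} (φ : SigmaA l A → ℝ) (P : ℝ)
    (μ : Measure (SigmaA l A)) : Prop :=
  ∃ c : ℝ, 1 < c ∧ ∀ (ω : SigmaA l A) (k : ℕ), 0 < k →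
    c⁻¹ ≤ (μ (cylinder A (wordPrefix ω k))).toReal / Real.exp (birkhoff φ k ω - k * P) ∧
      (μ (cylinder A (wordPrefix ω k))).toReal / Real.exp (birkhoff φ k ω - k * P) ≤ c

/-- `φ` is Hölder continuous with respect to the metric `d(ω,υ) = 2^{-(ω ∧ υ)}`:
there are `C` and an exponent `s > 0` with `|φ(ω) − φ(υ)| ≤ C ⬝ d(ω,υ)^s`, i.e.
`|φ(ω) − φ(υ)| ≤ C ⬝ 2^{-sn}` whenever `ω` and `υ` agree in their first `n` coordinates. -/
def HolderCont {A : Matrix (Fin l) (Fin l) ℕ} (φ : SigmaA l A → ℝ) : Prop :=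
  ∃ C s : ℝ, 0 < s ∧ ∀ (ω υ : SigmaA l A) (n : ℕ),
    (∀ i < n, ω.1 i = υ.1 i) → |φ ω - φ υ| ≤ C * (2 : ℝ) ^ (-(s * n))

/-- Prepending a letter `a` to a sequence `ω` (an admissible preimage of `ω` under the
shift). -/
def consSeq {A : Matrix (Fin l) (Fin l) ℕ} (a : Fin l) (ω : SigmaA l A)
    (h : A a (ω.1 0) = 1) : SigmaA l A :=
  ⟨fun n => match n with
    | 0 => a
    | (k + 1) => ω.1 k,
   by
    intro k
    match k with
    | 0 => exact h
    | (m + 1) => exact ω.2 m⟩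

/-- The Perron-Frobenius-Ruelle operator `(L_φ f)(ω) = ∑_{σ(υ)=ω} e^{φ(υ)} f(υ)`. -/
noncomputable def transferOp (A : Matrix (Fin l) (Fin l) ℕ) (φ : SigmaA l A → ℝ)
    (f : SigmaA l A → ℝ) : SigmaA l A → ℝ := fun ω =>
  ∑ a : Fin l, if h : A a (ω.1 0) = 1 then
    Real.exp (φ (consSeq a ω h)) * f (consSeq a ω h) else 0

variable {A : Matrix (Fin l) (Fin l) ℕ} {φ : SigmaA l A → ℝ}

/-! ### The shift, its inverse branches and the transfer operator -/

lemma consSeq_shift (ω : SigmaA l A) : consSeq (ω.1 0) (shift ω) (ω.2 0) = ω := by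
  apply Subtype.ext
  funext n
  cases n <;> rfl

lemma birkhoff_succ (φ : SigmaA l A → ℝ) (n : ℕ) (ω : SigmaA l A) :
    birkhoff φ (n + 1) ω = φ ω + birkhoff φ n (shift ω) := by
  rw [birkhoff, Finset.sum_range_succ', add_comm]
  rfl

/-- `ω` and `υ` have the same first `n` letters. -/
def Agree (n : ℕ) (ω υ : SigmaA l A) : Prop := ∀ i < n, ω.1 i = υ.1 i

lemma Agree.consSeq {n : ℕ} {ω υ : SigmaA l A} (h : Agree n ω υ) (a : Fin l)
    (hω : A a (ω.1 0) = 1) (hυ : A a (υ.1 0) = 1) :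
    Agree (n + 1) (consSeq a ω hω) (consSeq a υ hυ) := by
  intro i hi
  cases i with
  | zero => rfl
  | succ i => exact h i (by omega)

lemma transferOp_mono {f g : SigmaA l A → ℝ} (h : ∀ x, f x ≤ g x) (x : SigmaA l A) :
    transferOp A φ f x ≤ transferOp A φ g x := by
  refine Finset.sum_le_sum fun a _ => ?_
  split_ifs with ha
  · exact mul_le_mul_of_nonneg_left (h _) (Real.exp_pos _).le
  · exact le_rfl

lemma transferOp_const_mul (c : ℝ) (f : SigmaA l A → ℝ) :
    transferOp A φ (fun x => c * f x) = fun x => c * transferOp A φ f x := by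
  funext x
  simp only [transferOp, Finset.mul_sum]
  refine Finset.sum_congr rfl fun a _ => ?_
  split_ifs <;> ring

lemma transferOp_add (f g : SigmaA l A → ℝ) :
    transferOp A φ (fun x => f x + g x) = fun x => transferOp A φ f x + transferOp A φ g x := by
  funext x
  simp only [transferOp, ← Finset.sum_add_distrib]
  refine Finset.sum_congr rfl fun a _ => ?_
  split_ifs <;> ring

lemma transferOp_nonneg {f : SigmaA l A → ℝ} (h : ∀ x, 0 ≤ f x) (x : SigmaA l A) :
    0 ≤ transferOp A φ f x := by
  refine Finset.sum_nonneg fun a _ => ?_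
  split_ifs with ha
  · exact mul_nonneg (Real.exp_pos _).le (h _)
  · exact le_rfl

lemma iterate_transferOp_mono (n : ℕ) : ∀ {f g : SigmaA l A → ℝ}, (∀ x, f x ≤ g x) →
    ∀ x, (transferOp A φ)^[n] f x ≤ (transferOp A φ)^[n] g x := by
  induction n with
  | zero => intro f g h; exact h
  | succ n ih => intro f g h; exact ih (transferOp_mono h)

lemma iterate_transferOp_nonneg (n : ℕ) : ∀ {f : SigmaA l A → ℝ}, (∀ x, 0 ≤ f x) →
    ∀ x, 0 ≤ (transferOp A φ)^[n] f x := by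
  induction n with
  | zero => intro f h; exact h
  | succ n ih => intro f h; exact ih (transferOp_nonneg h)

lemma iterate_transferOp_const_mul (n : ℕ) (c : ℝ) : ∀ (f : SigmaA l A → ℝ),
    (transferOp A φ)^[n] (fun x => c * f x) = fun x => c * (transferOp A φ)^[n] f x := by
  induction n with
  | zero => intro f; rfl
  | succ n ih =>
    intro f
    rw [Function.iterate_succ_apply, transferOp_const_mul, ih]
    rfl

lemma exp_mul_le_transferOp {g : SigmaA l A → ℝ} (hg : ∀ x, 0 ≤ g x) (z : SigmaA l A) :
    Real.exp (φ z) * g z ≤ transferOp A φ g (shift z) := by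
  have h0 : A (z.1 0) ((shift z).1 0) = 1 := z.2 0
  have := Finset.single_le_sum (f := fun a : Fin l => if h : A a ((shift z).1 0) = 1 then
    Real.exp (φ (consSeq a (shift z) h)) * g (consSeq a (shift z) h) else 0)
    (s := Finset.univ) (fun a _ => by
      split_ifs
      · exact mul_nonneg (Real.exp_pos _).le (hg _)
      · exact le_rfl) (Finset.mem_univ (z.1 0))
  simp only [h0, dif_pos, consSeq_shift] at this
  exact this

lemma exp_birkhoff_mul_le_iterate {g : SigmaA l A → ℝ} (hg : ∀ x, 0 ≤ g x) (n : ℕ)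
    (z : SigmaA l A) :
    Real.exp (birkhoff φ n z) * g z ≤ (transferOp A φ)^[n] g (shift^[n] z) := by
  induction n with
  | zero => simp [birkhoff]
  | succ n ih =>
    rw [Function.iterate_succ_apply', Function.iterate_succ_apply']
    refine le_trans ?_ (exp_mul_le_transferOp (iterate_transferOp_nonneg n hg) _)
    rw [birkhoff, Finset.sum_range_succ, add_comm, Real.exp_add, mul_assoc]
    exact mul_le_mul_of_nonneg_left ih (Real.exp_pos _).le

/-! ### Bounded distortion -/

section Distortion

variable {v : ℕ → ℝ}

lemma iterate_le_of_agree
    (hv : ∀ (n : ℕ) (ω υ : SigmaA l A), Agree n ω υ → |φ ω - φ υ| ≤ v n) (n : ℕ) :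
    ∀ f g : SigmaA l A → ℝ, (∀ x, 0 ≤ g x) → (∀ x y, Agree (n + 1) x y → f x ≤ g y) →
      ∀ x y : SigmaA l A, x.1 0 = y.1 0 →
        (transferOp A φ)^[n] f x ≤
          Real.exp (∑ i ∈ Finset.range n, v (i + 2)) * (transferOp A φ)^[n] g y := by
  induction n with
  | zero =>
    intro f g _ h x y hxy
    simpa using h x y fun i hi => by
      obtain rfl : i = 0 := by omega
      exact hxy
  | succ n ih =>
    intro f g hg h x y hxy
    have key := ih (transferOp A φ f) (fun y => Real.exp (v (n + 2)) * transferOp A φ g y)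
      (fun y => mul_nonneg (Real.exp_pos _).le (transferOp_nonneg hg y)) ?_ x y hxy
    · rw [iterate_transferOp_const_mul] at key
      rw [Finset.sum_range_succ, Real.exp_add, mul_assoc]
      exact key
    · intro x y hxy
      have h0 : x.1 0 = y.1 0 := hxy 0 (by omega)
      simp only [transferOp, Finset.mul_sum]
      refine Finset.sum_le_sum fun a _ => ?_
      by_cases ha : A a (x.1 0) = 1
      · have hb : A a (y.1 0) = 1 := h0 ▸ ha
        rw [dif_pos ha, dif_pos hb, ← mul_assoc, ← Real.exp_add]
        have hag := hxy.consSeq a ha hb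
        have hosc := (abs_le.1 (hv _ _ _ hag)).2
        calc _ ≤ Real.exp (φ (consSeq a x ha)) * g (consSeq a y hb) :=
              mul_le_mul_of_nonneg_left (h _ _ hag) (Real.exp_pos _).le
          _ ≤ _ := mul_le_mul_of_nonneg_right (Real.exp_le_exp.2 (by linarith)) (hg _)
      · have hb : ¬ A a (y.1 0) = 1 := h0 ▸ ha
        rw [dif_neg ha, dif_neg hb, mul_zero]

open Classical in
lemma iterate_indicator_le
    (hv : ∀ (n : ℕ) (ω υ : SigmaA l A), Agree n ω υ → |φ ω - φ υ| ≤ v n) (n : ℕ) :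
    ∀ ω x : SigmaA l A, (transferOp A φ)^[n] (fun υ => if Agree n υ ω then 1 else 0) x ≤
      Real.exp (∑ i ∈ Finset.range n, v (i + 1)) * Real.exp (birkhoff φ n ω) := by
  induction n with
  | zero =>
    intro ω x
    simp [birkhoff]
    split_ifs <;> norm_num
  | succ n ih =>
    intro ω x
    have hstep : ∀ y : SigmaA l A,
        transferOp A φ (fun υ => if Agree (n + 1) υ ω then 1 else 0) y ≤
          Real.exp (v (n + 1) + φ ω) * (if Agree n y (shift ω) then 1 else 0) := by
      intro y
      have hterm : ∀ a ∈ Finset.univ, a ≠ ω.1 0 → (if h : A a (y.1 0) = 1 then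
          Real.exp (φ (consSeq a y h)) *
            (if Agree (n + 1) (consSeq a y h) ω then (1 : ℝ) else 0) else 0) = 0 := by
        intro a _ ha
        split_ifs with h1 h2
        · exact absurd (h2 0 (by omega)) ha
        · simp
        · rfl
      rw [transferOp, Finset.sum_eq_single _ hterm (by simp)]
      split_ifs with h1 h2 h3 h3
      · have := (abs_le.1 (hv _ _ _ h2)).2
        simpa using this
      · exact absurd (fun i hi => h2 (i + 1) (by omega)) h3
      · simpa using (Real.exp_pos _).le
      · simp
      · simpa using (Real.exp_pos _).le
      · simp
    have := iterate_transferOp_mono (φ := φ) n hstep x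
    rw [iterate_transferOp_const_mul] at this
    rw [Function.iterate_succ_apply]
    refine this.trans ((mul_le_mul_of_nonneg_left (ih (shift ω) x) (Real.exp_pos _).le).trans
      (le_of_eq ?_))
    simp only [birkhoff_succ, Finset.sum_range_succ _ n, ← Real.exp_add]
    ring_nf

end Distortion

lemma exists_shift_iterate_eq (h01 : ∀ i j, A i j = 0 ∨ A i j = 1) (N : ℕ) :
    ∀ (b : Fin l) (y : SigmaA l A), 0 < (A ^ N) b (y.1 0) →
      ∃ z : SigmaA l A, z.1 0 = b ∧ shift^[N] z = y := by
  induction N with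
  | zero =>
    intro b y h
    refine ⟨y, ?_, rfl⟩
    by_contra hne
    simp [Matrix.one_apply_ne (Ne.symm hne)] at h
  | succ N ih =>
    intro b y h
    rw [pow_succ', Matrix.mul_apply] at h
    obtain ⟨j, -, hj⟩ := Finset.exists_ne_zero_of_sum_ne_zero h.ne'
    obtain ⟨z, hz0, hz⟩ := ih j y (Nat.pos_of_ne_zero (right_ne_zero_of_mul hj))
    have hbj : A b (z.1 0) = 1 := by
      rw [hz0]
      exact (h01 b j).resolve_left (left_ne_zero_of_mul hj)
    exact ⟨consSeq b z hbj, rfl, hz⟩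

lemma nonempty_sigmaA (hl : 0 < l) (hA : Primitive A) : Nonempty (SigmaA l A) := by
  obtain ⟨h01, n, hn, hpos⟩ := hA
  have hsucc : ∀ i, ∃ j, A i j = 1 := by
    intro i
    obtain ⟨m, rfl⟩ := Nat.exists_eq_succ_of_ne_zero hn.ne'
    have h := hpos i i
    rw [pow_succ', Matrix.mul_apply] at h
    obtain ⟨j, -, hj⟩ := Finset.exists_ne_zero_of_sum_ne_zero h.ne'
    exact ⟨j, (h01 i j).resolve_left (left_ne_zero_of_mul hj)⟩
  choose next hnext using hsucc
  refine ⟨⟨fun n => next^[n] ⟨0, hl⟩, fun k => ?_⟩⟩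
  change A (next^[k] _) (next^[k + 1] _) = 1
  rw [Function.iterate_succ_apply']
  exact hnext _

open Classical in
/-- Uniform comparison of the iterates of the transfer operator at different points, and
its upper bound on cylinder sets. -/
structure Comparison (A : Matrix (Fin l) (Fin l) ℕ) (φ : SigmaA l A → ℝ) (K : ℝ) (N : ℕ) :
    Prop where
  pos : 0 < K
  iterate_le : ∀ (n : ℕ) (f g : SigmaA l A → ℝ), (∀ x, 0 ≤ g x) →
    (∀ x y, Agree (n + 1) x y → f x ≤ g y) → ∀ x y : SigmaA l A,
      (transferOp A φ)^[n] f x ≤ K * (transferOp A φ)^[N + n] g y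
  indicator_le : ∀ (n : ℕ) (ω x : SigmaA l A),
    (transferOp A φ)^[n] (fun υ => if Agree n υ ω then 1 else 0) x ≤
      K * Real.exp (birkhoff φ n ω)

lemma HolderCont.exists_comparison (hA : Primitive A) (hφ : HolderCont φ)
    (x₀ : SigmaA l A) : ∃ K N, Comparison A φ K N := by
  obtain ⟨h01, N, -, hN⟩ := hA
  obtain ⟨C, s, hs, hC⟩ := hφ
  have hC0 : 0 ≤ C := by simpa using hC x₀ x₀ 0 (by simp)
  set r : ℝ := (2 : ℝ) ^ (-s) with hr
  have hr0 : 0 < r := Real.rpow_pos_of_pos two_pos _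
  have hr1 : r < 1 := Real.rpow_lt_one_of_one_lt_of_neg one_lt_two (by linarith)
  have hv : ∀ (n : ℕ) (ω υ : SigmaA l A), Agree n ω υ → |φ ω - φ υ| ≤ C * r ^ n := by
    intro n ω υ h
    refine (hC ω υ n h).trans_eq ?_
    rw [hr, ← Real.rpow_natCast, ← Real.rpow_mul two_pos.le, neg_mul]
  have hsum : ∀ n k : ℕ, ∑ i ∈ Finset.range n, C * r ^ (i + k) ≤ C * (1 - r)⁻¹ := by
    intro n k
    rw [← Finset.mul_sum]
    refine mul_le_mul_of_nonneg_left ?_ hC0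
    rw [← tsum_geometric_of_lt_one hr0.le hr1]
    refine le_trans (Finset.sum_le_sum fun i _ => ?_)
      ((summable_geometric_of_lt_one hr0.le hr1).sum_le_tsum _ fun i _ => by positivity)
    exact pow_le_pow_of_le_one hr0.le hr1.le (by omega)
  set V := C * (1 - r)⁻¹ with hV
  set M := |φ x₀| + C with hM
  have hbound : ∀ x, -M ≤ φ x := by
    intro x
    have h1 := abs_le.1 (hv 0 x x₀ (by intro i hi; omega))
    have h2 := neg_abs_le (φ x₀)
    simp only [pow_zero, mul_one] at h1
    linarith [h1.1]
  have hbirk : ∀ n x, -(n * M) ≤ birkhoff φ n x := by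
    intro n x
    rw [birkhoff]
    have := Finset.card_nsmul_le_sum (Finset.range n) (fun m => φ (shift^[m] x)) (-M)
      fun i _ => hbound _
    simpa using this
  refine ⟨Real.exp V * Real.exp (N * M), N, by positivity, ?_, ?_⟩
  · intro n f g hg h x y
    obtain ⟨z, hz0, hz⟩ := exists_shift_iterate_eq h01 N (x.1 0) y (hN _ _)
    have hLg := iterate_transferOp_nonneg (φ := φ) n hg
    have h1 := iterate_le_of_agree hv n f g hg h x z hz0.symm
    have h2 := exp_birkhoff_mul_le_iterate (φ := φ) hLg N z
    rw [hz, ← Function.iterate_add_apply] at h2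
    have h3 : (transferOp A φ)^[n] g z ≤
        Real.exp (N * M) * (transferOp A φ)^[N + n] g y := by
      have h4 : Real.exp (-(N * M)) * (transferOp A φ)^[n] g z ≤
          (transferOp A φ)^[N + n] g y :=
        (mul_le_mul_of_nonneg_right (Real.exp_le_exp.2 (hbirk N z)) (hLg z)).trans h2
      rw [Real.exp_neg, inv_mul_le_iff₀ (Real.exp_pos _)] at h4
      exact h4
    calc _ ≤ _ := h1
      _ ≤ Real.exp V * (transferOp A φ)^[n] g z :=
        mul_le_mul_of_nonneg_right (Real.exp_le_exp.2 (hsum n 2)) (hLg z)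
      _ ≤ Real.exp V * (Real.exp (N * M) * (transferOp A φ)^[N + n] g y) :=
        mul_le_mul_of_nonneg_left h3 (Real.exp_pos _).le
      _ = _ := by ring
  · intro n ω x
    refine (iterate_indicator_le hv n ω x).trans
      (mul_le_mul_of_nonneg_right ?_ (Real.exp_pos _).le)
    have h1 : Real.exp (∑ i ∈ Finset.range n, C * r ^ (i + 1)) ≤ Real.exp V :=
      Real.exp_le_exp.2 (hsum n 1)
    have hNM : 0 ≤ N * M := by positivity
    exact h1.trans (le_mul_of_one_le_right (Real.exp_pos _).le (Real.one_le_exp hNM))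

/-! ### Topology of the subshift -/

lemma continuous_coord (n : ℕ) : Continuous fun ω : SigmaA l A => ω.1 n :=
  (continuous_apply n).comp continuous_subtype_val

instance compactSpace_sigmaA : CompactSpace (SigmaA l A) := by
  have : {ω : ℕ → Fin l | ∀ k, A (ω k) (ω (k + 1)) = 1} =
      ⋂ k, {ω | A (ω k) (ω (k + 1)) = 1} := by
    ext ω
    simp
  refine (isCompact_iff_compactSpace
    (s := {ω : ℕ → Fin l | ∀ k, A (ω k) (ω (k + 1)) = 1})).1 (IsClosed.isCompact ?_)
  rw [this]
  refine isClosed_iInter fun k => ?_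
  have hc : Continuous fun ω : ℕ → Fin l => (ω k, ω (k + 1)) := by fun_prop
  exact (isClosed_discrete {p : Fin l × Fin l | A p.1 p.2 = 1}).preimage hc

lemma isClopen_agree (n : ℕ) (ω : SigmaA l A) : IsClopen {υ : SigmaA l A | Agree n υ ω} := by
  have : {υ : SigmaA l A | Agree n υ ω} = ⋂ i ∈ Finset.range n, {υ | υ.1 i = ω.1 i} := by
    ext υ
    simp [Agree]
  rw [this]
  exact Set.Finite.isClopen_biInter (Finset.finite_toSet _) fun i _ =>
    (isClopen_discrete {ω.1 i}).preimage (continuous_coord i)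

lemma HolderCont.continuous (hφ : HolderCont φ) : Continuous φ := by
  obtain ⟨C, s, hs, hC⟩ := hφ
  rw [continuous_iff_continuousAt]
  intro ω
  rw [ContinuousAt, Metric.tendsto_nhds]
  intro ε hε
  have hlim : Tendsto (fun n : ℕ => C * ((2 : ℝ) ^ (-s)) ^ n) atTop (nhds (C * 0)) :=
    (tendsto_pow_atTop_nhds_zero_of_lt_one (Real.rpow_nonneg two_pos.le _)
      (Real.rpow_lt_one_of_one_lt_of_neg one_lt_two (by linarith))).const_mul C
  rw [mul_zero] at hlim
  obtain ⟨n, hn⟩ := (hlim.eventually (gt_mem_nhds hε)).exists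
  filter_upwards [(isClopen_agree n ω).isOpen.mem_nhds (fun i _ => rfl)] with υ hυ
  refine (hC υ ω n hυ).trans_lt ?_
  rwa [← Real.rpow_natCast, ← Real.rpow_mul two_pos.le, neg_mul] at hn

/-- A continuous function on the subshift is nearly determined by finitely many letters. -/
lemma exists_agree_le_add {f : SigmaA l A → ℝ} (hf : Continuous f) {ε : ℝ} (hε : 0 < ε) :
    ∃ n, ∀ x y, Agree (n + 1) x y → f x ≤ f y + ε := by
  by_contra! hcon
  choose x y hxy hlt using hcon
  let U : Ultrafilter ℕ := hyperfilter ℕ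
  obtain ⟨z, -, hz⟩ := isCompact_univ.ultrafilter_le_nhds (U.map x) (by simp)
  have hx : Tendsto x U (nhds z) := hz
  have hU : (U : Filter ℕ) ≤ atTop := by
    rw [← Nat.cofinite_eq_atTop]
    exact hyperfilter_le_cofinite
  have hy : Tendsto y U (nhds z) := by
    rw [tendsto_subtype_rng, tendsto_pi_nhds]
    intro i
    refine Tendsto.congr' ?_ (((continuous_coord i).tendsto z).comp hx)
    filter_upwards [hU (eventually_ge_atTop i)] with n hn
    exact hxy n i (by omega)
  have := le_of_tendsto_of_tendsto' (((hf.tendsto z).comp hy).add_const ε)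
    ((hf.tendsto z).comp hx) fun n => (hlt n).le
  linarith

open Classical in
lemma continuous_transferOp (hφ : Continuous φ) {f : SigmaA l A → ℝ} (hf : Continuous f) :
    Continuous (transferOp A φ f) := by
  refine continuous_finsetSum _ fun a _ => ?_
  let cons : SigmaA l A → SigmaA l A :=
    fun ω => if h : A a (ω.1 0) = 1 then consSeq a ω h else ω
  have hcons : Continuous cons := by
    rw [continuous_induced_rng, continuous_pi_iff]
    intro n
    have hcoord : ∀ ω : SigmaA l A, (cons ω).1 n =
        if A a (ω.1 0) = 1 then (if n = 0 then a else ω.1 (n - 1)) else ω.1 n := by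
      intro ω
      by_cases h : A a (ω.1 0) = 1
      · simp only [cons, dif_pos h, if_pos h]
        cases n <;> rfl
      · simp only [cons, dif_neg h, if_neg h]
    have hc : Continuous fun ω : SigmaA l A => (ω.1 0, ω.1 (n - 1), ω.1 n) :=
      (continuous_coord 0).prodMk ((continuous_coord (n - 1)).prodMk (continuous_coord n))
    exact ((continuous_of_discreteTopology (f := fun p : Fin l × Fin l × Fin l =>
      if A a p.1 = 1 then (if n = 0 then a else p.2.1) else p.2.2)).comp hc).congr
        fun ω => (hcoord ω).symm
  have hind : Continuous fun ω : SigmaA l A => if A a (ω.1 0) = 1 then (1 : ℝ) else 0 :=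
    (continuous_of_discreteTopology (f := fun b : Fin l =>
      if A a b = 1 then (1 : ℝ) else 0)).comp (continuous_coord 0)
  refine (hind.mul ((Real.continuous_exp.comp (hφ.comp hcons)).mul (hf.comp hcons))).congr ?_
  intro ω
  by_cases h : A a (ω.1 0) = 1
  · simp [cons, h]
  · simp [h]

/-! ### Positive eigenfunctionals of the dual operator -/

/-- The transfer operator as a linear map on continuous functions. -/
noncomputable def transferLin (hφ : Continuous φ) :
    C(SigmaA l A, ℝ) →ₗ[ℝ] C(SigmaA l A, ℝ) where
  toFun f := ⟨transferOp A φ f, continuous_transferOp hφ f.continuous⟩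
  map_add' f g := by
    ext x
    exact congrFun (transferOp_add (φ := φ) f g) x
  map_smul' c f := by
    ext x
    exact congrFun (transferOp_const_mul (φ := φ) c f) x

lemma coe_transferLin_pow (hφ : Continuous φ) (n : ℕ) (f : C(SigmaA l A, ℝ)) :
    ⇑((transferLin hφ ^ n) f) = (transferOp A φ)^[n] f := by
  induction n with
  | zero => rfl
  | succ n ih =>
    rw [pow_succ', Function.iterate_succ_apply', ← ih]
    rfl

/-- A positive functional on continuous functions which is an eigenvector, with eigenvalue
`lam`, of the dual of the transfer operator. -/
structure IsEigenFunctional (hφ : Continuous φ) (lam : ℝ) (Λ : C(SigmaA l A, ℝ) →ₗ[ℝ] ℝ) :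
    Prop where
  map_nonneg : ∀ f, (∀ x, 0 ≤ f x) → 0 ≤ Λ f
  map_transfer : ∀ f, Λ (transferLin hφ f) = lam * Λ f

namespace IsEigenFunctional

variable {hφ : Continuous φ} {lam lam' K : ℝ} {N : ℕ} {Λ Λ' : C(SigmaA l A, ℝ) →ₗ[ℝ] ℝ}

lemma mono (h : IsEigenFunctional hφ lam Λ) {f g : C(SigmaA l A, ℝ)}
    (hfg : ∀ x, f x ≤ g x) : Λ f ≤ Λ g := by
  have := h.map_nonneg (g - f) fun x => by simpa using hfg x
  rw [map_sub] at this
  linarith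

lemma map_pow (h : IsEigenFunctional hφ lam Λ) (n : ℕ) (f : C(SigmaA l A, ℝ)) :
    Λ ((transferLin hφ ^ n) f) = lam ^ n * Λ f := by
  induction n with
  | zero => simp
  | succ n ih =>
    rw [pow_succ', Module.End.mul_apply, h.map_transfer, ih]
    ring

lemma apply_le (h : IsEigenFunctional hφ lam Λ) {n : ℕ} {f : C(SigmaA l A, ℝ)} {c : ℝ}
    (hf : ∀ x, (transferOp A φ)^[n] f x ≤ c) : lam ^ n * Λ f ≤ c * Λ 1 := by
  rw [← h.map_pow, ← smul_eq_mul c, ← map_smul]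
  refine h.mono fun x => ?_
  rw [coe_transferLin_pow]
  simpa using hf x

lemma le_apply (h : IsEigenFunctional hφ lam Λ) {n : ℕ} {f : C(SigmaA l A, ℝ)} {c : ℝ}
    (hf : ∀ x, c ≤ (transferOp A φ)^[n] f x) : c * Λ 1 ≤ lam ^ n * Λ f := by
  rw [← h.map_pow, ← smul_eq_mul c, ← map_smul]
  refine h.mono fun x => ?_
  rw [coe_transferLin_pow]
  simpa using hf x

lemma mul_le_mul (h : IsEigenFunctional hφ lam Λ) (h' : IsEigenFunctional hφ lam' Λ')
    {m n : ℕ} {f g : C(SigmaA l A, ℝ)}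
    (hfg : ∀ x y, (transferOp A φ)^[m] f x ≤ K * (transferOp A φ)^[n] g y) :
    lam ^ m * Λ f * Λ' 1 ≤ K * (lam' ^ n * Λ' g) * Λ 1 := by
  have hK : ∀ x, (transferOp A φ)^[m] f x * Λ' 1 ≤ K * (lam' ^ n * Λ' g) := by
    intro x
    have := h'.le_apply (n := n) (f := K • g) (c := (transferOp A φ)^[m] f x) fun y => by
      refine (hfg x y).trans_eq ?_
      exact (congrFun (iterate_transferOp_const_mul (φ := φ) n K g) y).symm
    rw [map_smul, smul_eq_mul] at this
    linarith
  have := h.apply_le (n := m) (f := Λ' 1 • f) (c := K * (lam' ^ n * Λ' g)) fun x => by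
    have hx := congrFun (iterate_transferOp_const_mul (φ := φ) m (Λ' 1) f) x
    refine (le_of_eq hx).trans ?_
    linarith [hK x]
  rw [map_smul, smul_eq_mul] at this
  linarith

lemma eigenvalue_le (hK : Comparison A φ K N) (hlam' : 0 < lam')
    (h : IsEigenFunctional hφ lam Λ) (h' : IsEigenFunctional hφ lam' Λ')
    (h1 : Λ 1 = 1) (h1' : Λ' 1 = 1) : lam ≤ lam' := by
  by_contra! hlt
  have hbound : ∀ n : ℕ, (lam / lam') ^ n ≤ K * lam' ^ N := by
    intro n
    have := h.mul_le_mul (K := K) h' (f := 1) (g := 1)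
      (hK.iterate_le n _ _ (fun _ => zero_le_one) fun _ _ _ => le_rfl)
    rw [h1, h1', pow_add] at this
    rw [div_pow, div_le_iff₀ (pow_pos hlam' n)]
    linarith
  obtain ⟨n, hn⟩ := pow_unbounded_of_one_lt (K * lam' ^ N) ((one_lt_div hlam').2 hlt)
  exact absurd (hbound n) (not_le.2 hn)

lemma apply_mul_le (hK : Comparison A φ K N) (hlam : 0 < lam)
    (h : IsEigenFunctional hφ lam Λ) (h' : IsEigenFunctional hφ lam Λ')
    (h1 : Λ 1 = 1) (f : C(SigmaA l A, ℝ)) (hf : ∀ x, 0 ≤ f x) :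
    Λ f * Λ' 1 ≤ K * lam ^ N * Λ' f := by
  have hε : ∀ ε > 0, Λ f * Λ' 1 ≤ K * lam ^ N * (Λ' f + ε * Λ' 1) := by
    intro ε hε
    obtain ⟨n, hn⟩ := exists_agree_le_add f.continuous hε
    have := h.mul_le_mul (K := K) h' (f := f) (g := f + ε • 1)
      (hK.iterate_le n _ _ (fun x => add_nonneg (hf x) (by simpa using hε.le))
        fun x y hxy => by simpa using hn x y hxy)
    rw [h1, map_add, map_smul, smul_eq_mul, pow_add] at this
    have hn : 0 < lam ^ n := pow_pos hlam n
    refine le_of_mul_le_mul_left ?_ hn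
    linarith
  have hlim : Tendsto (fun ε : ℝ => K * lam ^ N * (Λ' f + ε * Λ' 1)) (nhdsWithin 0 (Set.Ioi 0))
      (nhds (K * lam ^ N * (Λ' f + 0 * Λ' 1))) :=
    tendsto_nhdsWithin_of_tendsto_nhds (Continuous.tendsto (by fun_prop) 0)
  rw [zero_mul, add_zero] at hlim
  exact ge_of_tendsto hlim (eventually_mem_nhdsWithin.mono hε)

lemma apply_le_of_eigen (hK : Comparison A φ K N) (hlam : 0 < lam)
    (h : IsEigenFunctional hφ lam Λ) (h' : IsEigenFunctional hφ lam Λ')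
    (h1 : Λ 1 = 1) (h1' : Λ' 1 = 1) (f : C(SigmaA l A, ℝ)) (hf : ∀ x, 0 ≤ f x) :
    Λ f ≤ Λ' f := by
  set D := K * lam ^ N with hD
  have hDpos : 0 < D := mul_pos hK.pos (pow_pos hlam N)
  have hD1 : 1 ≤ D := by
    have := apply_mul_le hK hlam h h' h1 1 fun _ => zero_le_one
    rw [h1, h1'] at this
    linarith
  have hiter : ∀ n : ℕ, ∀ f : C(SigmaA l A, ℝ), (∀ x, 0 ≤ f x) →
      (1 - (1 - D⁻¹) ^ n) * Λ f ≤ Λ' f := by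
    intro n
    induction n with
    | zero =>
      intro f hf
      simpa using h'.map_nonneg f hf
    | succ n ih =>
      intro f hf
      set t := 1 - (1 - D⁻¹) ^ n with ht
      have hν : IsEigenFunctional hφ lam (Λ' - t • Λ) := by
        refine ⟨fun g hg => ?_, fun g => ?_⟩
        · simpa using ih g hg
        · simp only [LinearMap.sub_apply, LinearMap.smul_apply, h.map_transfer,
            h'.map_transfer, smul_eq_mul]
          ring
      have := apply_mul_le hK hlam h hν h1 f hf
      simp only [LinearMap.sub_apply, LinearMap.smul_apply, h1, h1', smul_eq_mul] at this
      rw [← hD, ← inv_mul_le_iff₀ hDpos] at this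
      have hpow : (1 - D⁻¹) ^ (n + 1) = (1 - D⁻¹) * (1 - t) := by rw [ht]; ring
      rw [hpow]
      linarith
  have hlim : Tendsto (fun n : ℕ => (1 - (1 - D⁻¹) ^ n) * Λ f) atTop
      (nhds ((1 - 0) * Λ f)) :=
    ((tendsto_pow_atTop_nhds_zero_of_lt_one (by linarith [inv_le_one_of_one_le₀ hD1])
      (by linarith [inv_pos.2 hDpos])).const_sub 1).mul_const _
  rw [sub_zero, one_mul] at hlim
  exact le_of_tendsto' hlim fun n => hiter n f hf

lemma unique (hK : Comparison A φ K N) (hlam : 0 < lam) (hlam' : 0 < lam')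
    (h : IsEigenFunctional hφ lam Λ) (h' : IsEigenFunctional hφ lam' Λ')
    (h1 : Λ 1 = 1) (h1' : Λ' 1 = 1) : lam' = lam ∧ Λ' = Λ := by
  obtain rfl : lam' = lam :=
    le_antisymm (eigenvalue_le hK hlam h' h h1' h1) (eigenvalue_le hK hlam' h h' h1 h1')
  refine ⟨rfl, LinearMap.ext fun f => ?_⟩
  have hpos : ∀ x, 0 ≤ (f + ‖f‖ • (1 : C(SigmaA l A, ℝ))) x := by
    intro x
    have := neg_le_of_abs_le (f.norm_coe_le_norm x)
    simpa using by linarith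
  have := le_antisymm (apply_le_of_eigen hK hlam' h' h h1' h1 _ hpos)
    (apply_le_of_eigen hK hlam' h h' h1 h1' _ hpos)
  simpa [h1, h1'] using this

end IsEigenFunctional

/-! ### Existence of an eigenfunctional -/

/-- A positive sequence that is multiplicative up to a constant is, up to the same constant,
a geometric sequence. -/
lemma exists_geometric_of_almost_multiplicative {Z : ℕ → ℝ} {D : ℝ} (hZ : ∀ n, 0 < Z n)
    (hD : 0 < D) (hle : ∀ m n, Z (m + n) ≤ D * (Z m * Z n))
    (hge : ∀ m n, Z m * Z n ≤ D * Z (m + n)) :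
    ∃ lam : ℝ, 0 < lam ∧ ∀ n, lam ^ n ≤ D * Z n ∧ Z n ≤ D * lam ^ n := by
  set u : ℕ → ℝ := fun n => Real.log D + Real.log (Z n) with hu
  set w : ℕ → ℝ := fun n => Real.log D - Real.log (Z n) with hw
  have hsub : Subadditive u := by
    intro m n
    have := Real.log_le_log (hZ _) (hle m n)
    rw [Real.log_mul hD.ne' (mul_pos (hZ m) (hZ n)).ne',
      Real.log_mul (hZ m).ne' (hZ n).ne'] at this
    simp only [hu]
    linarith
  have hsub' : Subadditive w := by
    intro m n
    have := Real.log_le_log (mul_pos (hZ m) (hZ n)) (hge m n)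
    rw [Real.log_mul hD.ne' (hZ _).ne', Real.log_mul (hZ m).ne' (hZ n).ne'] at this
    simp only [hw]
    linarith
  have hzero : 1 ≤ D * Z 0 := by
    have := hle 0 0
    rw [add_zero, ← mul_assoc] at this
    exact (le_mul_iff_one_le_left (hZ 0)).1 this
  have hzero' : Z 0 ≤ D := le_of_mul_le_mul_right (hge 0 0) (hZ 0)
  have hcross : ∀ m n : ℕ, 0 ≤ n * u m + m * w n := by
    intro m n
    have h1 := hsub.apply_mul_add_le n m 0
    have h2 := hsub'.apply_mul_add_le m n 0
    rw [mul_comm m n] at h2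
    have h3 : u (n * m + 0) + w (n * m + 0) = u 0 + w 0 := by simp only [hu, hw]; ring
    linarith
  have hlow : ∀ m n : ℕ, 0 < m → 0 < n → -w n / n ≤ u m / m := by
    intro m n hm hn
    have hm' : (0 : ℝ) < m := by exact_mod_cast hm
    have hn' : (0 : ℝ) < n := by exact_mod_cast hn
    rw [div_le_div_iff₀ hn' hm']
    linarith [hcross m n]
  set S : Set ℝ := (fun n : ℕ => u n / n) '' Set.Ici 1 with hS
  have hbdd : BddBelow S := by
    refine ⟨-w 1 / (1 : ℕ), ?_⟩
    rintro _ ⟨m, hm, rfl⟩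
    exact hlow m 1 hm one_pos
  have hne : S.Nonempty := Set.Nonempty.image _ ⟨1, Set.self_mem_Ici⟩
  refine ⟨Real.exp (sInf S), Real.exp_pos _, fun n => ?_⟩
  rcases Nat.eq_zero_or_pos n with rfl | hn
  · simpa using ⟨hzero, hzero'⟩
  have hn' : (0 : ℝ) < n := by exact_mod_cast hn
  rw [← Real.exp_nat_mul]
  constructor
  · have h1 : sInf S ≤ u n / n := csInf_le hbdd ⟨n, hn, rfl⟩
    rw [le_div_iff₀ hn'] at h1
    rw [← Real.exp_log (mul_pos hD (hZ n)), Real.log_mul hD.ne' (hZ n).ne']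
    exact Real.exp_le_exp.2 (by simpa only [mul_comm] using h1)
  · have h1 : -w n / n ≤ sInf S := by
      refine le_csInf hne ?_
      rintro _ ⟨m, hm, rfl⟩
      exact hlow m n hm hn
    rw [div_le_iff₀ hn'] at h1
    simp only [hw] at h1
    calc Z n = Real.exp (Real.log (Z n)) := (Real.exp_log (hZ n)).symm
      _ ≤ Real.exp (Real.log D + n * sInf S) := Real.exp_le_exp.2 (by linarith)
      _ = _ := by rw [Real.exp_add, Real.exp_log hD]

lemma iterate_abs_le (hφ : Continuous φ) (n : ℕ) (f : C(SigmaA l A, ℝ)) (x : SigmaA l A) :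
    |(transferLin hφ ^ n) f x| ≤ ‖f‖ * (transferLin hφ ^ n) 1 x := by
  have hmul : ∀ c : ℝ, c * (transferLin hφ ^ n) 1 x =
      (transferOp A φ)^[n] (fun _ => c * 1) x := by
    intro c
    rw [coe_transferLin_pow]
    exact (congrFun (iterate_transferOp_const_mul (φ := φ) n c fun _ => 1) x).symm
  rw [abs_le, ← neg_mul, hmul, hmul, coe_transferLin_pow]
  constructor <;> refine iterate_transferOp_mono n (fun y => ?_) x
  · simpa using neg_le_of_abs_le (f.norm_coe_le_norm y)
  · simpa using le_of_abs_le (f.norm_coe_le_norm y)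

lemma Comparison.exists_growth {K : ℝ} {N : ℕ} (hK : Comparison A φ K N) (hφ : Continuous φ)
    (x₀ : SigmaA l A) : ∃ lam D : ℝ, 0 < lam ∧ 0 < D ∧
      ∀ n, lam ^ n ≤ D * (transferLin hφ ^ n) 1 x₀ ∧
        (transferLin hφ ^ n) 1 x₀ ≤ D * lam ^ n := by
  set L := transferLin hφ with hL
  set D := K * ‖(L ^ N) 1‖ with hD
  have hnonneg : ∀ n x, 0 ≤ (L ^ n) 1 x := fun n x => by
    rw [coe_transferLin_pow]
    exact iterate_transferOp_nonneg n (fun _ => zero_le_one) x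
  have hcomp : ∀ n x y, (L ^ n) 1 x ≤ D * (L ^ n) 1 y := by
    intro n x y
    have h1 := hK.iterate_le n _ _ (fun z => zero_le_one' ℝ) (fun _ _ _ => le_rfl) x y
    have h2 : (L ^ (N + n)) 1 y ≤ ‖(L ^ N) 1‖ * (L ^ n) 1 y := by
      rw [add_comm N n, pow_add, Module.End.mul_apply]
      exact (le_abs_self _).trans (iterate_abs_le hφ n _ y)
    rw [coe_transferLin_pow] at h2
    rw [coe_transferLin_pow] at h2 ⊢
    calc _ ≤ _ := h1
      _ ≤ K * (‖(L ^ N) 1‖ * (transferOp A φ)^[n] (1 : C(SigmaA l A, ℝ)) y) :=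
        mul_le_mul_of_nonneg_left h2 hK.pos.le
      _ = _ := by rw [hD]; ring
  have hpos' : ∀ n, 0 < D * (L ^ n) 1 x₀ := by
    intro n
    refine lt_of_lt_of_le ?_ (hcomp n (shift^[n] x₀) x₀)
    have := exp_birkhoff_mul_le_iterate (φ := φ) (g := fun _ => 1) (fun _ => zero_le_one) n x₀
    rw [coe_transferLin_pow]
    exact lt_of_lt_of_le (by positivity) this
  have hpos : ∀ n, 0 < (L ^ n) 1 x₀ := fun n =>
    (hnonneg n x₀).lt_of_ne' (right_ne_zero_of_mul (hpos' n).ne')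
  have hDpos : 0 < D := pos_of_mul_pos_left (hpos' 0) (hpos 0).le
  have hmul : ∀ n (c : ℝ), c * (L ^ n) 1 x₀ = (L ^ n) (c • 1) x₀ := fun n c => by
    rw [map_smul]
    rfl
  have hmono : ∀ n (f g : C(SigmaA l A, ℝ)), (∀ x, f x ≤ g x) → (L ^ n) f x₀ ≤ (L ^ n) g x₀ := by
    intro n f g hfg
    rw [coe_transferLin_pow, coe_transferLin_pow]
    exact iterate_transferOp_mono n hfg x₀
  obtain ⟨lam, hlam, h⟩ := exists_geometric_of_almost_multiplicative
    (Z := fun n => (L ^ n) 1 x₀) hpos hDpos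
    (fun m n => by
      have := hmono m ((L ^ n) 1) ((D * (L ^ n) 1 x₀) • 1) fun x => by
        simpa using hcomp n x x₀
      rw [← hmul, ← Module.End.mul_apply, ← pow_add] at this
      linarith)
    (fun m n => by
      have := hmono m (((L ^ n) 1 x₀) • 1) (D • (L ^ n) 1) fun x => by
        simpa using hcomp n x₀ x
      rw [← hmul, map_smul, ← Module.End.mul_apply, ← pow_add] at this
      simp only [ContinuousMap.smul_apply, smul_eq_mul] at this
      linarith)
  exact ⟨lam, D, hlam, hDpos, h⟩

/-- Pointwise limits along an ultrafilter of uniformly bounded functionals. -/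
lemma exists_ultrafilter_limit {E : Type*} [SeminormedAddCommGroup E] [Module ℝ E]
    (U : Ultrafilter ℕ) (F : ℕ → E →ₗ[ℝ] ℝ) (hF : ∀ n f, |F n f| ≤ ‖f‖) :
    ∃ Λ : E →ₗ[ℝ] ℝ, ∀ f, Tendsto (fun n => F n f) U (nhds (Λ f)) := by
  have hlim : ∀ f, ∃ a, Tendsto (fun n => F n f) U (nhds a) := by
    intro f
    obtain ⟨a, -, ha⟩ := (isCompact_Icc (a := -‖f‖) (b := ‖f‖)).ultrafilter_le_nhds
      (U.map fun n => F n f) (by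
        rw [Ultrafilter.coe_map, le_principal_iff]
        exact Filter.mem_map.2 (univ_mem' fun n => abs_le.1 (hF n f)))
    exact ⟨a, ha⟩
  choose Λ hΛ using hlim
  refine ⟨⟨⟨Λ, fun f g => ?_⟩, fun c f => ?_⟩, hΛ⟩
  · refine tendsto_nhds_unique (hΛ (f + g)) ?_
    simpa only [map_add] using (hΛ f).add (hΛ g)
  · refine tendsto_nhds_unique (hΛ (c • f)) ?_
    simpa only [map_smul, smul_eq_mul, RingHom.id_apply] using (hΛ f).const_mul c

lemma Comparison.exists_eigenFunctional {K : ℝ} {N : ℕ} (hK : Comparison A φ K N)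
    (hφ : Continuous φ) (x₀ : SigmaA l A) :
    ∃ (lam : ℝ) (Λ : C(SigmaA l A, ℝ) →ₗ[ℝ] ℝ), 0 < lam ∧ IsEigenFunctional hφ lam Λ ∧
      Λ 1 = 1 := by
  obtain ⟨lam, D, hlam, hD, hgrowth⟩ := hK.exists_growth hφ x₀
  set L := transferLin hφ with hL
  let E : ℕ → C(SigmaA l A, ℝ) →ₗ[ℝ] ℝ := fun n =>
    { toFun := fun f => ∑ i ∈ Finset.range n, (lam ^ i)⁻¹ * (L ^ i) f x₀
      map_add' := fun f g => by
        simp only [map_add, ContinuousMap.add_apply, mul_add, Finset.sum_add_distrib]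
      map_smul' := fun c f => by
        simp only [map_smul, ContinuousMap.smul_apply, smul_eq_mul, RingHom.id_apply,
          Finset.mul_sum]
        exact Finset.sum_congr rfl fun i _ => by ring }
  have hE : ∀ n f, E n f = ∑ i ∈ Finset.range n, (lam ^ i)⁻¹ * (L ^ i) f x₀ := fun _ _ => rfl
  have hEabs : ∀ n f, |E n f| ≤ ‖f‖ * E n 1 := by
    intro n f
    rw [hE, hE, Finset.mul_sum]
    refine (Finset.abs_sum_le_sum_abs _ _).trans (Finset.sum_le_sum fun i _ => ?_)
    have hi : 0 < (lam ^ i)⁻¹ := inv_pos.2 (pow_pos hlam i)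
    rw [abs_mul, abs_of_pos hi, mul_left_comm]
    exact mul_le_mul_of_nonneg_left (iterate_abs_le hφ i f x₀) hi.le
  have hEone : ∀ n : ℕ, n * D⁻¹ ≤ E n 1 := by
    intro n
    rw [hE]
    have := Finset.card_nsmul_le_sum (Finset.range n)
      (fun i => (lam ^ i)⁻¹ * (L ^ i) 1 x₀) D⁻¹ fun i _ => by
        rw [inv_mul_eq_div, le_div_iff₀ (pow_pos hlam i), inv_mul_le_iff₀ hD]
        exact (hgrowth i).1
    simpa using this
  have hEnonneg : ∀ n, 0 ≤ E n 1 := fun n => le_trans (by positivity) (hEone n)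
  have hEtop : Tendsto (fun n => E n 1) atTop atTop :=
    tendsto_atTop_mono hEone (tendsto_natCast_atTop_atTop.atTop_mul_const (inv_pos.2 hD))
  have hshift : ∀ n f, E n (L f) - lam * E n f = lam * ((lam ^ n)⁻¹ * (L ^ n) f x₀ - f x₀) := by
    intro n f
    induction n with
    | zero => simp [hE]
    | succ n ih =>
      have hsucc : ∀ g, E (n + 1) g = E n g + (lam ^ n)⁻¹ * (L ^ n) g x₀ := fun g => by
        rw [hE, hE, Finset.sum_range_succ]
      rw [hsucc, hsucc, ← Module.End.mul_apply, ← pow_succ, pow_succ lam, mul_inv]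
      have : lam * (((lam ^ n)⁻¹ * lam⁻¹) * (L ^ (n + 1)) f x₀) =
          (lam ^ n)⁻¹ * (L ^ (n + 1)) f x₀ := by
        field_simp
      linarith
  have hFabs : ∀ n f, |((E n 1)⁻¹ • E n) f| ≤ ‖f‖ := by
    intro n f
    rw [LinearMap.smul_apply, smul_eq_mul, abs_mul, abs_of_nonneg (inv_nonneg.2 (hEnonneg n))]
    rcases (hEnonneg n).eq_or_lt with h0 | h0
    · simp [← h0]
    · rw [inv_mul_le_iff₀ h0]
      linarith [hEabs n f]
  have hU : ((hyperfilter ℕ : Ultrafilter ℕ) : Filter ℕ) ≤ atTop := by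
    rw [← Nat.cofinite_eq_atTop]
    exact hyperfilter_le_cofinite
  obtain ⟨Λ, hΛ⟩ := exists_ultrafilter_limit (hyperfilter ℕ) _ hFabs
  refine ⟨lam, Λ, hlam, ⟨fun f hf => ?_, fun f => ?_⟩, ?_⟩
  · refine ge_of_tendsto' (hΛ f) fun n => ?_
    refine mul_nonneg (inv_nonneg.2 (hEnonneg n)) ?_
    rw [hE]
    refine Finset.sum_nonneg fun i _ => ?_
    refine mul_nonneg (inv_pos.2 (pow_pos hlam i)).le ?_
    rw [coe_transferLin_pow]
    exact iterate_transferOp_nonneg i hf x₀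
  · have h1 := (hΛ (L f)).sub ((hΛ f).const_mul lam)
    have hbound : ∀ n, |lam * ((lam ^ n)⁻¹ * (L ^ n) f x₀ - f x₀)| ≤
        lam * (‖f‖ * D + ‖f‖) := by
      intro n
      rw [abs_mul, abs_of_pos hlam]
      refine mul_le_mul_of_nonneg_left ((abs_sub _ _).trans (add_le_add ?_
        (f.norm_coe_le_norm x₀))) hlam.le
      have hn := pow_pos hlam n
      rw [abs_mul, abs_of_pos (inv_pos.2 hn), inv_mul_le_iff₀ hn]
      refine (iterate_abs_le hφ n f x₀).trans ?_
      have := mul_le_mul_of_nonneg_left (hgrowth n).2 (norm_nonneg f)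
      linarith
    have h2 : Tendsto (fun n => (E n 1)⁻¹ * (lam * ((lam ^ n)⁻¹ * (L ^ n) f x₀ - f x₀)))
        atTop (nhds 0) :=
      hEtop.inv_tendsto_atTop.zero_mul_isBoundedUnder_le
        (isBoundedUnder_of ⟨_, fun n => hbound n⟩)
    have h3 := tendsto_nhds_unique h1 ((h2.mono_left hU).congr fun n => by
      rw [← hshift, LinearMap.smul_apply, LinearMap.smul_apply, smul_eq_mul, smul_eq_mul]
      ring)
    linarith
  · refine tendsto_nhds_unique (hΛ 1) (tendsto_const_nhds.congr' ?_)
    filter_upwards [hU (hEtop.eventually_gt_atTop 0)] with n hn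
    rw [LinearMap.smul_apply, smul_eq_mul, inv_mul_cancel₀ hn.ne']

/-! ### From functionals to measures -/

/-- Integration of continuous functions against a finite measure. -/
noncomputable def integralLin (μ : Measure (SigmaA l A)) [IsFiniteMeasure μ] :
    C(SigmaA l A, ℝ) →ₗ[ℝ] ℝ where
  toFun f := ∫ x, f x ∂μ
  map_add' f g := integral_add (f.continuous.integrable_of_hasCompactSupport
    (HasCompactSupport.of_compactSpace f)) (g.continuous.integrable_of_hasCompactSupport
    (HasCompactSupport.of_compactSpace g))
  map_smul' c _ := integral_const_mul c _

lemma integralLin_one (μ : Measure (SigmaA l A)) [IsProbabilityMeasure μ] :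
    integralLin μ 1 = 1 := by
  simp [integralLin]

lemma isEigenFunctional_integralLin (hφ : Continuous φ) {lam : ℝ} {μ : Measure (SigmaA l A)}
    [IsProbabilityMeasure μ] (h : ∀ f : SigmaA l A → ℝ, Continuous f →
      ∫ ω, transferOp A φ f ω ∂μ = lam * ∫ ω, f ω ∂μ) :
    IsEigenFunctional hφ lam (integralLin μ) :=
  ⟨fun _ hf => integral_nonneg hf, fun f => h f f.continuous⟩

open CompactlySupported in
lemma exists_measure_of_functional (Λ : C(SigmaA l A, ℝ) →ₗ[ℝ] ℝ)
    (hΛ : ∀ f, (∀ x, 0 ≤ f x) → 0 ≤ Λ f) (h1 : Λ 1 = 1) :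
    ∃ μ : Measure (SigmaA l A), IsProbabilityMeasure μ ∧
      ∀ f : C(SigmaA l A, ℝ), ∫ x, f x ∂μ = Λ f := by
  let T : C_c(SigmaA l A, ℝ) →ₗ[ℝ] ℝ :=
    { toFun := fun f => Λ f.toContinuousMap
      map_add' := fun f g => map_add Λ f.toContinuousMap g.toContinuousMap
      map_smul' := fun c f => map_smul Λ c f.toContinuousMap }
  let P : C_c(SigmaA l A, ℝ) →ₚ[ℝ] ℝ := PositiveLinearMap.mk₀ T fun f hf => hΛ _ hf
  have hintegral : ∀ f : C(SigmaA l A, ℝ), ∫ x, f x ∂(RealRMK.rieszMeasure P) = Λ f := fun f =>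
    RealRMK.integral_rieszMeasure P (CompactlySupportedContinuousMap.continuousMapEquiv f)
  refine ⟨RealRMK.rieszMeasure P, ⟨?_⟩, hintegral⟩
  have := hintegral 1
  simp only [ContinuousMap.one_apply, integral_const, smul_eq_mul, mul_one, h1] at this
  exact (ENNReal.toReal_eq_one_iff _).1 this

lemma measure_eq_of_integralLin_eq {μ ν : Measure (SigmaA l A)} [IsProbabilityMeasure μ]
    [IsProbabilityMeasure ν] (h : integralLin μ = integralLin ν) : μ = ν := by
  have : SecondCountableTopology (SigmaA l A) :=
    Topology.IsEmbedding.subtypeVal.secondCountableTopology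
  have := TopologicalSpace.metrizableSpace_of_t3_secondCountable (SigmaA l A)
  let _ := TopologicalSpace.metrizableSpaceMetric (SigmaA l A)
  exact ext_of_forall_integral_eq_of_IsFiniteMeasure fun f =>
    LinearMap.congr_fun h f.toContinuousMap

lemma cylinder_wordPrefix (ω : SigmaA l A) (k : ℕ) :
    cylinder A (wordPrefix ω k) = {υ | Agree k υ ω} := by
  ext υ
  simp [cylinder, wordPrefix, Agree]

lemma Comparison.isGibbs {K : ℝ} {N : ℕ} (hK : Comparison A φ K N) (hφ : Continuous φ)
    {lam : ℝ} (hlam : 0 < lam) {μ : Measure (SigmaA l A)} [IsProbabilityMeasure μ]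
    (h : IsEigenFunctional hφ lam (integralLin μ)) : IsGibbs φ (Real.log lam) μ := by
  classical
  have hKN : 0 < K * lam ^ N := mul_pos hK.pos (pow_pos hlam N)
  refine ⟨K + K * lam ^ N + 1, by linarith [hK.pos], fun ω k _ => ?_⟩
  have hclopen := isClopen_agree k ω
  let f : C(SigmaA l A, ℝ) := ⟨fun υ => if Agree k υ ω then 1 else 0,
    continuous_const.if (by
      intro a ha
      rw [hclopen.frontier_eq] at ha
      exact ha.elim) continuous_const⟩
  have hf : integralLin μ f = (μ (cylinder A (wordPrefix ω k))).toReal := by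
    rw [cylinder_wordPrefix]
    exact integral_indicator_one hclopen.isOpen.measurableSet
  have hexp : Real.exp (birkhoff φ k ω - k * Real.log lam) =
      Real.exp (birkhoff φ k ω) / lam ^ k := by
    rw [Real.exp_sub, Real.exp_nat_mul, Real.exp_log hlam]
  rw [← hf, hexp]
  set m := integralLin μ f with hm
  have hk := pow_pos hlam k
  have hb := Real.exp_pos (birkhoff φ k ω)
  have hfnonneg : ∀ x, 0 ≤ f x := fun x => by
    change 0 ≤ (if Agree k x ω then (1 : ℝ) else 0)
    split_ifs <;> norm_num
  have hm0 : 0 ≤ m := h.map_nonneg f hfnonneg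
  have hup := h.apply_le (n := k) (f := f) fun x => hK.indicator_le k ω x
  have hlow := h.le_apply (n := N + k) (f := K • f) (c := Real.exp (birkhoff φ k ω))
    fun x => by
      have h1 := exp_birkhoff_mul_le_iterate (φ := φ) hfnonneg k ω
      have h2 := hK.iterate_le k f f hfnonneg (fun x y hxy => by
        change (if Agree k x ω then (1 : ℝ) else 0) ≤ if Agree k y ω then 1 else 0
        have hiff : Agree k x ω ↔ Agree k y ω := forall₂_congr fun i hi => by
          rw [hxy i (by omega)]
        simp only [hiff, le_refl]) (shift^[k] ω) x
      have h3 : f ω = 1 := if_pos fun i _ => rfl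
      rw [h3, mul_one] at h1
      exact (h1.trans h2).trans_eq
        (congrFun (iterate_transferOp_const_mul (φ := φ) (N + k) K f) x).symm
  rw [integralLin_one, mul_one] at hup hlow
  rw [map_smul, smul_eq_mul, pow_add, ← hm] at hlow
  rw [← hm] at hup
  have hratio : m / (Real.exp (birkhoff φ k ω) / lam ^ k) =
      lam ^ k * m / Real.exp (birkhoff φ k ω) := by
    field_simp
  rw [hratio]
  constructor
  · rw [le_div_iff₀ hb, inv_mul_le_iff₀ (by linarith [hK.pos])]
    have : 0 ≤ (K + 1) * (lam ^ k * m) := mul_nonneg (by linarith [hK.pos]) (by positivity)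
    linarith
  · rw [div_le_iff₀ hb]
    have : 0 ≤ (K * lam ^ N + 1) * Real.exp (birkhoff φ k ω) := by positivity
    linarith

/-- There is a unique `λ > 0` and a unique Borel probability measure `μ`
with `∫ L_φ f dμ = λ ∫ f dμ` for all continuous `f`; this `μ` is a Gibbs measure for `φ`
with pressure `P = ln λ`. -/
theorem transfer_dual_eigenmeasure
    (hl : 2 ≤ l) (A : Matrix (Fin l) (Fin l) ℕ) (hA : Primitive A)
    (φ : SigmaA l A → ℝ) (hφ : HolderCont φ) :
    ∃ (lam : ℝ) (μ : Measure (SigmaA l A)), 0 < lam ∧ IsProbabilityMeasure μ ∧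
      (∀ f : SigmaA l A → ℝ, Continuous f →
        ∫ ω, transferOp A φ f ω ∂μ = lam * ∫ ω, f ω ∂μ) ∧
      IsGibbs φ (Real.log lam) μ ∧
      ∀ (lam' : ℝ) (μ' : Measure (SigmaA l A)), 0 < lam' → IsProbabilityMeasure μ' →
        (∀ f : SigmaA l A → ℝ, Continuous f →
          ∫ ω, transferOp A φ f ω ∂μ' = lam' * ∫ ω, f ω ∂μ') →
        lam' = lam ∧ μ' = μ := by
  obtain ⟨x₀⟩ := nonempty_sigmaA (by omega) hA
  have hc := hφ.continuous
  obtain ⟨K, N, hK⟩ := hφ.exists_comparison hA x₀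
  obtain ⟨lam, Λ, hlam, hΛ, h1⟩ := hK.exists_eigenFunctional hc x₀
  obtain ⟨μ, hμ, hintegral⟩ := exists_measure_of_functional Λ hΛ.map_nonneg h1
  have heigen : ∀ f : SigmaA l A → ℝ, Continuous f →
      ∫ ω, transferOp A φ f ω ∂μ = lam * ∫ ω, f ω ∂μ := by
    intro f hf
    have h := hΛ.map_transfer ⟨f, hf⟩
    rw [← hintegral, ← hintegral] at h
    exact h
  have hμeigen := isEigenFunctional_integralLin hc heigen
  refine ⟨lam, μ, hlam, hμ, heigen, hK.isGibbs hc hlam hμeigen, ?_⟩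
  intro lam' μ' hlam' hμ' heigen'
  obtain ⟨hl', hμμ'⟩ := IsEigenFunctional.unique hK hlam hlam' hμeigen
    (isEigenFunctional_integralLin hc heigen') (integralLin_one μ) (integralLin_one μ')
  exact ⟨hl', measure_eq_of_integralLin_eq hμμ'⟩

end SFT
end

section
/- Let (Ω, F, P) be a probability space, T : Ω → Ω a measure-preserving transformation, and Y : Ω → [0, ∞) an integrable random variable with E(1/Y) < ∞ (so Y > 0 almost surely). For k ∈ ℕ set Y_k := Y∘T^{k−1} (a stationary sequence) and S_k := Y_1 + ⋯ + Y_k, and for t > 0 let N_t := sup{ k ∈ ℕ : S_k ≤ t }. Let Ŷ := lim_{k→∞} S_k / k, which exists almost surely by Birkhoff's ergodic theorem and is strictly positive almost surely. Then N_t / t converges to 1/Ŷ in L¹-norm as t → ∞, i.e. lim_{t→∞} E | N_t/t − 1/Ŷ | = 0. -/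
open MeasureTheory Filter

theorem le_sSup_pos_iff {S : ℕ → ℝ} (hS : Monotone S) (hlim : Tendsto S atTop atTop) {t : ℝ}
    {k : ℕ} (hk : 0 < k) : k ≤ sSup {k : ℕ | 0 < k ∧ S k ≤ t} ↔ S k ≤ t := by
  have hbdd : BddAbove {k : ℕ | 0 < k ∧ S k ≤ t} := by
    obtain ⟨m, hm⟩ := (hlim.eventually_gt_atTop t).exists
    refine ⟨m, fun j hj => ?_⟩
    by_contra! h
    exact absurd (hS h.le) (not_le.2 (hj.2.trans_lt hm))
  refine ⟨fun h => ?_, fun h => le_csSup hbdd ⟨hk, h⟩⟩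
  have hne : {k : ℕ | 0 < k ∧ S k ≤ t}.Nonempty := by
    by_contra hne
    rw [Set.not_nonempty_iff_eq_empty.1 hne] at h
    simp at h
    omega
  exact (hS h).trans (Nat.sSup_mem hne hbdd).2

theorem tendsto_atTop_of_tendsto_div_natCast {S : ℕ → ℝ} {y : ℝ} (hy : 0 < y)
    (h : Tendsto (fun k : ℕ => S k / (k : ℝ)) atTop (nhds y)) : Tendsto S atTop atTop := by
  refine (h.pos_mul_atTop hy tendsto_natCast_atTop_atTop).congr' ?_
  filter_upwards [eventually_gt_atTop 0] with k hk
  field_simp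

/-- The deterministic renewal theorem. -/
theorem tendsto_sSup_div {S : ℕ → ℝ} (hS : Monotone S) {y : ℝ} (hy : 0 < y)
    (h : Tendsto (fun k : ℕ => S k / (k : ℝ)) atTop (nhds y)) :
    Tendsto (fun t : ℝ => ((sSup {k : ℕ | 0 < k ∧ S k ≤ t} : ℕ) : ℝ) / t) atTop (nhds y⁻¹) := by
  have hlim := tendsto_atTop_of_tendsto_div_natCast hy h
  set N : ℝ → ℕ := fun t => sSup {k : ℕ | 0 < k ∧ S k ≤ t} with hN
  have hNlim : Tendsto N atTop atTop := by
    refine tendsto_atTop.2 fun m => ?_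
    filter_upwards [eventually_ge_atTop (S (m + 1))] with t ht
    exact (Nat.le_succ m).trans ((le_sSup_pos_iff hS hlim m.succ_pos).2 ht)
  have hsucc : Tendsto (fun k : ℕ => S (k + 1) / (k : ℝ)) atTop (nhds y) := by
    have h1 := ((tendsto_add_atTop_iff_nat 1).2 h).mul
      (tendsto_const_nhds.add (tendsto_inv_atTop_nhds_zero_nat (𝕜 := ℝ)) :
        Tendsto (fun n : ℕ => (1 : ℝ) + (n : ℝ)⁻¹) atTop _)
    rw [add_zero, mul_one] at h1
    refine h1.congr' ?_
    filter_upwards [eventually_gt_atTop 0] with k hk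
    push_cast
    field_simp
  have key : Tendsto (fun t : ℝ => t / (N t : ℝ)) atTop (nhds y) := by
    refine tendsto_of_tendsto_of_tendsto_of_le_of_le' (h.comp hNlim) (hsucc.comp hNlim) ?_ ?_
    · filter_upwards [hNlim.eventually_gt_atTop 0] with t ht
      have := (le_sSup_pos_iff hS hlim ht).1 le_rfl
      simp only [Function.comp]
      gcongr
    · refine Eventually.of_forall fun t => ?_
      have : t < S (N t + 1) := by
        by_contra! hle
        exact absurd ((le_sSup_pos_iff hS hlim (N t).succ_pos).2 hle) (by simp [hN])
      simp only [Function.comp]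
      gcongr
  exact (key.inv₀ hy.ne').congr fun t => inv_div _ _

theorem natCast_sSup_eq_tsum {S : ℕ → ℝ} (hS : Monotone S) (hlim : Tendsto S atTop atTop) (t : ℝ) :
    ((sSup {k : ℕ | 0 < k ∧ S k ≤ t} : ℕ) : ENNReal) =
      ∑' k : ℕ, if S (k + 1) ≤ t then 1 else 0 := by
  rw [tsum_eq_sum (s := Finset.range (sSup {k : ℕ | 0 < k ∧ S k ≤ t})),
    Finset.sum_congr rfl (g := fun _ => 1)]
  · simp
  · intro k hk
    rw [if_pos ((le_sSup_pos_iff hS hlim k.succ_pos).1 (Finset.mem_range.1 hk))]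
  · intro k hk
    rw [if_neg fun h => hk (Finset.mem_range.2 ((le_sSup_pos_iff hS hlim k.succ_pos).2 h))]

theorem ofReal_sSup_sub_le_tsum {S : ℕ → ℝ} (hS : Monotone S) (hlim : Tendsto S atTop atTop)
    (t : ℝ) {a : ℝ} (ha : 0 ≤ a) :
    ENNReal.ofReal (((sSup {k : ℕ | 0 < k ∧ S k ≤ t} : ℕ) : ℝ) - a) ≤
      ∑' k : ℕ, if a < k + 1 ∧ S (k + 1) ≤ t then 1 else 0 := by
  set N := sSup {k : ℕ | 0 < k ∧ S k ≤ t} with hN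
  refine le_trans ?_ (ENNReal.sum_le_tsum (Finset.Ico ⌊a⌋₊ N))
  rw [Finset.sum_congr rfl (g := fun _ => 1)]
  · rw [Finset.sum_const, Nat.card_Ico, nsmul_one]
    refine ENNReal.ofReal_le_of_le_toReal ?_
    rw [ENNReal.toReal_natCast]
    have h1 : (N : ℝ) ≤ ((N - ⌊a⌋₊ : ℕ) : ℝ) + ⌊a⌋₊ := by
      exact_mod_cast Nat.le_add_of_sub_le le_rfl
    linarith [Nat.floor_le ha]
  · intro k hk
    rw [Finset.mem_Ico] at hk
    have h : a < (k + 1 : ℕ) := (Nat.floor_lt' k.succ_ne_zero).1 (Nat.lt_succ_of_le hk.1)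
    exact if_pos ⟨by exact_mod_cast h, (le_sSup_pos_iff hS hlim k.succ_pos).1 hk.2⟩

/-- If `k` nonnegative numbers have sum at most `t`, at least half of them are at most `2t/k`. -/
theorem card_le_two_mul_card_filter {k : ℕ} {y : ℕ → ℝ} (hy : ∀ i, 0 ≤ y i) {t : ℝ} (ht : 0 < t)
    (h : ∑ i ∈ Finset.range k, y i ≤ t) :
    k ≤ 2 * ((Finset.range k).filter fun i => y i * k ≤ 2 * t).card := by
  have h1 := Finset.card_filter_add_card_filter_not (s := Finset.range k) (fun i => y i * k ≤ 2 * t)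
  rw [Finset.card_range] at h1
  have h2 : (((Finset.range k).filter fun i => ¬ y i * k ≤ 2 * t).card : ℝ) * (2 * t) ≤ t * k := by
    calc _ = ∑ i ∈ (Finset.range k).filter fun i => ¬ y i * k ≤ 2 * t, 2 * t := by simp
      _ ≤ ∑ i ∈ (Finset.range k).filter fun i => ¬ y i * k ≤ 2 * t, y i * k :=
        Finset.sum_le_sum fun i hi => (not_le.1 (Finset.mem_filter.1 hi).2).le
      _ ≤ ∑ i ∈ Finset.range k, y i * k :=
        Finset.sum_le_sum_of_subset_of_nonneg (Finset.filter_subset _ _)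
          fun i _ _ => mul_nonneg (hy i) (Nat.cast_nonneg k)
      _ ≤ t * k := by rw [← Finset.sum_mul]; gcongr
  have h3 : (((Finset.range k).filter fun i => ¬ y i * k ≤ 2 * t).card : ℝ) * 2 ≤ k := by
    nlinarith
  have h4 : ((Finset.range k).filter fun i => ¬ y i * k ≤ 2 * t).card * 2 ≤ k := by
    exact_mod_cast h3
  omega

theorem tsum_ite_le_indicator {y t K : ℝ} (hy : 0 < y) (ht : 0 < t) :
    (∑' k : ℕ, if K * t < k + 1 ∧ y * (k + 1 : ℕ) ≤ 2 * t then 1 else 0 : ENNReal) ≤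
      ENNReal.ofReal (2 * t) * (if K * y ≤ 2 then (ENNReal.ofReal y)⁻¹ else 0) := by
  split_ifs with hK
  · rw [← ENNReal.ofReal_inv_of_pos hy, ← ENNReal.ofReal_mul (by positivity),
      tsum_eq_sum (s := Finset.range ⌊2 * t * y⁻¹⌋₊)]
    · calc _ ≤ ∑ k ∈ Finset.range ⌊2 * t * y⁻¹⌋₊, (1 : ENNReal) :=
            Finset.sum_le_sum fun k _ => by split_ifs <;> simp
        _ = ENNReal.ofReal (⌊2 * t * y⁻¹⌋₊ : ℝ) := by simp
        _ ≤ _ := ENNReal.ofReal_le_ofReal (Nat.floor_le (by positivity))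
    · intro k hk
      refine if_neg fun h => hk (Finset.mem_range.2 (Nat.le_floor ?_))
      rw [← div_eq_mul_inv, le_div_iff₀ hy, mul_comm]
      exact h.2
  · simp only [mul_zero, nonpos_iff_eq_zero, ENNReal.tsum_eq_zero]
    refine fun k => if_neg fun h => hK ?_
    have h1 := h.2
    push_cast at h1
    have h2 := mul_lt_mul_of_pos_left h.1 hy
    by_contra! h3
    nlinarith

section Stationary

variable {Ω : Type*} {T : Ω → Ω} {Y : Ω → ℝ}

theorem monotone_birkhoff_sum (hY0 : ∀ ω, 0 ≤ Y ω) (ω : Ω) :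
    Monotone fun k : ℕ => ∑ i ∈ Finset.range k, Y (T^[i] ω) :=
  monotone_nat_of_le_succ fun k => by
    rw [Finset.sum_range_succ]
    linarith [hY0 (T^[k] ω)]

variable [MeasurableSpace Ω] {P : Measure Ω}

theorem measure_birkhoff_sum_le (hT : MeasurePreserving T P P) (hYm : Measurable Y)
    (hY0 : ∀ ω, 0 ≤ Y ω) {k : ℕ} (hk : 0 < k) {t : ℝ} (ht : 0 < t) :
    P {ω | ∑ i ∈ Finset.range k, Y (T^[i] ω) ≤ t} ≤ 2 * P {ω | Y ω * k ≤ 2 * t} := by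
  have hB : MeasurableSet {ω | Y ω * k ≤ 2 * t} :=
    measurableSet_le (hYm.mul_const _) measurable_const
  have hA : MeasurableSet {ω | ∑ i ∈ Finset.range k, Y (T^[i] ω) ≤ t} :=
    measurableSet_le (Finset.measurable_sum _ fun i _ => hYm.comp (hT.iterate i).measurable)
      measurable_const
  have hB' : ∀ i, MeasurableSet (T^[i] ⁻¹' {ω | Y ω * k ≤ 2 * t}) :=
    fun i => (hT.iterate i).measurable hB
  have key : (k : ENNReal) * P {ω | ∑ i ∈ Finset.range k, Y (T^[i] ω) ≤ t} ≤
      k * (2 * P {ω | Y ω * k ≤ 2 * t}) := by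
    calc _ = ∫⁻ ω, {ω | ∑ i ∈ Finset.range k, Y (T^[i] ω) ≤ t}.indicator (fun _ => (k : ENNReal)) ω
          ∂P := (lintegral_indicator_const hA _).symm
      _ ≤ ∫⁻ ω, ∑ i ∈ Finset.range k,
          (T^[i] ⁻¹' {ω | Y ω * k ≤ 2 * t}).indicator (fun _ => (2 : ENNReal)) ω ∂P := by
        refine lintegral_mono fun ω => ?_
        by_cases hω : ω ∈ {ω | ∑ i ∈ Finset.range k, Y (T^[i] ω) ≤ t}
        swap
        · simp [Set.indicator_of_notMem hω]
        rw [Set.indicator_of_mem hω]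
        have h := card_le_two_mul_card_filter (fun i => hY0 (T^[i] ω)) ht hω
        classical
        simp only [Set.indicator_apply, Set.mem_preimage, Set.mem_ofPred_eq]
        rw [← Finset.sum_filter, Finset.sum_const, nsmul_eq_mul, mul_comm]
        exact_mod_cast h
      _ = ∑ i ∈ Finset.range k, 2 * P {ω | Y ω * k ≤ 2 * t} := by
        rw [lintegral_finsetSum _ fun i _ => measurable_const.indicator (hB' i)]
        refine Finset.sum_congr rfl fun i _ => ?_
        rw [lintegral_indicator_const (hB' i),
          (hT.iterate i).measure_preimage hB.nullMeasurableSet]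
      _ = _ := by simp
  exact (ENNReal.mul_le_mul_iff_right (by exact_mod_cast hk.ne') (ENNReal.natCast_ne_top k)).1 key

/-- The excess of `N_t / t` over the level `K` is controlled, uniformly in `t`, by the tail of
`1 / Y`. -/
theorem lintegral_renewal_excess_le (hT : MeasurePreserving T P P) (hYm : Measurable Y)
    (hY0 : ∀ ω, 0 ≤ Y ω) (hYpos : ∀ᵐ ω ∂P, 0 < Y ω)
    (hlim : ∀ᵐ ω ∂P, Tendsto (fun k : ℕ => ∑ i ∈ Finset.range k, Y (T^[i] ω)) atTop atTop)
    {t : ℝ} (ht : 0 < t) {K : ℝ} (hK : 0 ≤ K) :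
    ∫⁻ ω, ENNReal.ofReal
        (((sSup {k : ℕ | 0 < k ∧ ∑ i ∈ Finset.range k, Y (T^[i] ω) ≤ t} : ℕ) : ℝ) / t - K) ∂P ≤
      4 * ∫⁻ ω, (if K * Y ω ≤ 2 then (ENNReal.ofReal (Y ω))⁻¹ else 0) ∂P := by
  have hA : ∀ k : ℕ, MeasurableSet {ω | K * t < k + 1 ∧
      ∑ i ∈ Finset.range (k + 1), Y (T^[i] ω) ≤ t} := fun k =>
    (MeasurableSet.const _).inter (measurableSet_le
      (Finset.measurable_sum _ fun i _ => hYm.comp (hT.iterate i).measurable) measurable_const)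
  have hB : ∀ k : ℕ, MeasurableSet {ω | K * t < k + 1 ∧ Y ω * (k + 1 : ℕ) ≤ 2 * t} := fun k =>
    (MeasurableSet.const _).inter (measurableSet_le (hYm.mul_const _) measurable_const)
  have hg : Measurable fun ω => (if K * Y ω ≤ 2 then (ENNReal.ofReal (Y ω))⁻¹ else 0) :=
    Measurable.ite (measurableSet_le (hYm.const_mul _) measurable_const)
      hYm.ennreal_ofReal.inv measurable_const
  calc _ ≤ ∫⁻ ω, (ENNReal.ofReal t)⁻¹ * ∑' k : ℕ,
        (if K * t < k + 1 ∧ ∑ i ∈ Finset.range (k + 1), Y (T^[i] ω) ≤ t then 1 else 0) ∂P := by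
        refine lintegral_mono_ae ?_
        filter_upwards [hlim] with ω hω
        rw [← ENNReal.div_eq_inv_mul]
        refine le_trans ?_ (ENNReal.div_le_div_right (ofReal_sSup_sub_le_tsum
          (monotone_birkhoff_sum hY0 ω) hω t (mul_nonneg hK ht.le)) _)
        rw [← ENNReal.ofReal_div_of_pos ht, sub_div, mul_div_cancel_right₀ _ ht.ne']
    _ = (ENNReal.ofReal t)⁻¹ * ∑' k : ℕ, P {ω | K * t < k + 1 ∧
          ∑ i ∈ Finset.range (k + 1), Y (T^[i] ω) ≤ t} := by
        rw [lintegral_const_mul _ (Measurable.tsum fun k =>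
          Measurable.ite (hA k) measurable_const measurable_const), lintegral_tsum fun k =>
          (Measurable.ite (hA k) measurable_const measurable_const).aemeasurable]
        congr 1
        refine tsum_congr fun k => ?_
        rw [← lintegral_indicator_one (hA k)]
        simp only [Set.indicator_apply, Set.mem_ofPred_eq, Pi.one_apply]
    _ ≤ (ENNReal.ofReal t)⁻¹ * ∑' k : ℕ, 2 * P {ω | K * t < k + 1 ∧
          Y ω * (k + 1 : ℕ) ≤ 2 * t} := by
        gcongr with k
        by_cases h : K * t < k + 1
        · simpa only [h, true_and] using measure_birkhoff_sum_le hT hYm hY0 k.succ_pos ht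
        · simp [h]
    _ = (ENNReal.ofReal t)⁻¹ * (2 * ∫⁻ ω, ∑' k : ℕ,
          (if K * t < k + 1 ∧ Y ω * (k + 1 : ℕ) ≤ 2 * t then 1 else 0) ∂P) := by
        rw [ENNReal.tsum_mul_left, lintegral_tsum fun k =>
          (Measurable.ite (hB k) measurable_const measurable_const).aemeasurable]
        congr 2
        refine tsum_congr fun k => ?_
        rw [← lintegral_indicator_one (hB k)]
        simp only [Set.indicator_apply, Set.mem_ofPred_eq, Pi.one_apply]
    _ ≤ (ENNReal.ofReal t)⁻¹ * (2 * ∫⁻ ω, ENNReal.ofReal (2 * t) *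
          (if K * Y ω ≤ 2 then (ENNReal.ofReal (Y ω))⁻¹ else 0) ∂P) := by
        gcongr 2
        refine lintegral_mono_ae ?_
        filter_upwards [hYpos] with ω hω
        exact tsum_ite_le_indicator hω ht
    _ = _ := by
        rw [lintegral_const_mul _ hg, ENNReal.ofReal_mul zero_le_two, ENNReal.ofReal_ofNat]
        have h1 : (ENNReal.ofReal t)⁻¹ * ENNReal.ofReal t = 1 :=
          ENNReal.inv_mul_cancel (by simpa using ht) ENNReal.ofReal_ne_top
        calc _ = ((ENNReal.ofReal t)⁻¹ * ENNReal.ofReal t) * ((2 * 2) *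
              ∫⁻ ω, (if K * Y ω ≤ 2 then (ENNReal.ofReal (Y ω))⁻¹ else 0) ∂P) := by ring
          _ = _ := by rw [h1, one_mul]; norm_num

theorem tendsto_lintegral_inv_tail (hYm : Measurable Y) (hYpos : ∀ᵐ ω ∂P, 0 < Y ω)
    (hYinv : ∫⁻ ω, (ENNReal.ofReal (Y ω))⁻¹ ∂P < ⊤) :
    Tendsto (fun K : ℝ => ∫⁻ ω, (if K * Y ω ≤ 2 then (ENNReal.ofReal (Y ω))⁻¹ else 0) ∂P)
      atTop (nhds 0) := by
  rw [show nhds (0 : ENNReal) = nhds (∫⁻ _, 0 ∂P) by rw [lintegral_zero]]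
  refine tendsto_lintegral_filter_of_dominated_convergence
    (fun ω => (ENNReal.ofReal (Y ω))⁻¹) ?_ ?_ hYinv.ne ?_
  · exact Eventually.of_forall fun K =>
      Measurable.ite (measurableSet_le (hYm.const_mul _) measurable_const)
        hYm.ennreal_ofReal.inv measurable_const
  · exact Eventually.of_forall fun K => Eventually.of_forall fun ω => by split_ifs <;> simp
  · filter_upwards [hYpos] with ω hω
    refine tendsto_const_nhds.congr' ?_
    filter_upwards [eventually_gt_atTop (2 / Y ω)] with K hK
    rw [if_neg (not_le.2 ((div_lt_iff₀ hω).1 hK))]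

end Stationary

/-- Convergence in `L¹` from almost everywhere convergence and uniformly small excesses over
high levels. -/
theorem tendsto_lintegral_abs_sub_of_excess {Ω : Type*} [MeasurableSpace Ω] {P : Measure Ω}
    [IsFiniteMeasure P] {f : ℝ → Ω → ℝ} {g : Ω → ℝ} {e : ℝ → ENNReal}
    (hf : ∀ t, AEMeasurable (f t) P) (hg : AEMeasurable g P)
    (hf0 : ∀ t, 0 < t → ∀ ω, 0 ≤ f t ω)
    (hfg : ∀ᵐ ω ∂P, Tendsto (fun t => f t ω) atTop (nhds (g ω)))
    (he : Tendsto e atTop (nhds 0))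
    (hfe : ∀ t, 0 < t → ∀ K, 0 ≤ K → ∫⁻ ω, ENNReal.ofReal (f t ω - K) ∂P ≤ e K) :
    Tendsto (fun t => ∫⁻ ω, ENNReal.ofReal |f t ω - g ω| ∂P) atTop (nhds 0) := by
  have hge : ∀ K, 0 ≤ K → ∫⁻ ω, ENNReal.ofReal (g ω - K) ∂P ≤ e K := by
    intro K hK
    calc _ = ∫⁻ ω, liminf (fun n : ℕ => ENNReal.ofReal (f n ω - K)) atTop ∂P := by
          refine lintegral_congr_ae ?_
          filter_upwards [hfg] with ω hω
          exact (ENNReal.tendsto_ofReal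
            ((hω.comp tendsto_natCast_atTop_atTop).sub_const K)).liminf_eq.symm
      _ ≤ liminf (fun n : ℕ => ∫⁻ ω, ENNReal.ofReal (f n ω - K) ∂P) atTop :=
          lintegral_liminf_le' fun n => ((hf n).sub_const K).ennreal_ofReal
      _ ≤ liminf (fun _ : ℕ => e K) atTop := by
          refine liminf_le_liminf ?_
          filter_upwards [eventually_gt_atTop 0] with n hn
          exact hfe n (by exact_mod_cast hn) K hK
      _ = e K := liminf_const _
  have htrunc : ∀ K, 0 ≤ K → Tendsto
      (fun t => ∫⁻ ω, ENNReal.ofReal |min (f t ω) K - min (g ω) K| ∂P) atTop (nhds 0) := by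
    intro K hK
    rw [← lintegral_zero (μ := P)]
    refine tendsto_lintegral_filter_of_dominated_convergence' (fun _ => ENNReal.ofReal K)
      ?_ ?_ ?_ ?_
    · exact Eventually.of_forall fun t => (((hf t).min aemeasurable_const).sub
        (hg.min aemeasurable_const)).abs.ennreal_ofReal
    · filter_upwards [eventually_gt_atTop 0] with t ht
      filter_upwards [hfg] with ω hω
      have hg0 : 0 ≤ g ω := ge_of_tendsto hω
        ((eventually_gt_atTop 0).mono fun s hs => hf0 s hs ω)
      refine ENNReal.ofReal_le_ofReal (abs_sub_le_of_nonneg_of_le ?_ (min_le_right _ _) ?_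
        (min_le_right _ _))
      · exact le_min (hf0 t ht ω) hK
      · exact le_min hg0 hK
    · simp [ENNReal.mul_eq_top]
    · filter_upwards [hfg] with ω hω
      have := ((hω.min (tendsto_const_nhds (x := K))).sub_const (min (g ω) K)).abs
      simpa using ENNReal.tendsto_ofReal this
  rw [ENNReal.tendsto_nhds_zero]
  intro ε hε
  have hε3 : 0 < ε / 3 := ENNReal.div_pos hε.ne' (by simp)
  obtain ⟨K, hKe, hK⟩ := ((ENNReal.tendsto_nhds_zero.1 he _ hε3).and (eventually_ge_atTop 0)).exists
  filter_upwards [ENNReal.tendsto_nhds_zero.1 (htrunc K hK) _ hε3, eventually_gt_atTop 0]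
    with t h1 ht
  calc _ ≤ ∫⁻ ω, (ENNReal.ofReal |min (f t ω) K - min (g ω) K| + ENNReal.ofReal (f t ω - K) +
        ENNReal.ofReal (g ω - K)) ∂P := by
        refine lintegral_mono fun ω => ?_
        refine (ENNReal.ofReal_le_ofReal (q := |min (f t ω) K - min (g ω) K| +
          max (f t ω - K) 0 + max (g ω - K) 0) ?_).trans ?_
        · grind
        · refine ENNReal.ofReal_add_le.trans (add_le_add (ENNReal.ofReal_add_le.trans ?_) ?_) <;>
            simp
    _ = ∫⁻ ω, ENNReal.ofReal |min (f t ω) K - min (g ω) K| ∂P +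
        ∫⁻ ω, ENNReal.ofReal (f t ω - K) ∂P + ∫⁻ ω, ENNReal.ofReal (g ω - K) ∂P := by
        rw [lintegral_add_right' _ (hg.sub_const K).ennreal_ofReal,
          lintegral_add_right' _ ((hf t).sub_const K).ennreal_ofReal]
    _ ≤ ε / 3 + ε / 3 + ε / 3 :=
        add_le_add (add_le_add h1 ((hfe t ht K hK).trans hKe)) ((hge K hK).trans hKe)
    _ = ε := ENNReal.add_thirds ε

theorem tendsto_lintegral_renewal_of_measurable
    {Ω : Type*} [MeasurableSpace Ω] {P : Measure Ω} [IsFiniteMeasure P]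
    {T : Ω → Ω} (hT : MeasurePreserving T P P)
    {Y : Ω → ℝ} (hYm : Measurable Y) (hY0 : ∀ ω, 0 ≤ Y ω)
    (hYinv : ∫⁻ ω, (ENNReal.ofReal (Y ω))⁻¹ ∂P < ⊤)
    {Yhat : Ω → ℝ}
    (hYhat : ∀ᵐ ω ∂P, Tendsto
      (fun k : ℕ => (∑ i ∈ Finset.range k, Y (T^[i] ω)) / (k : ℝ)) atTop (nhds (Yhat ω)))
    (hYhatpos : ∀ᵐ ω ∂P, 0 < Yhat ω) :
    Tendsto
      (fun t : ℝ => ∫⁻ ω, ENNReal.ofReal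
        |((sSup {k : ℕ | 0 < k ∧ ∑ i ∈ Finset.range k, Y (T^[i] ω) ≤ t} : ℕ) : ℝ) / t -
          (Yhat ω)⁻¹| ∂P)
      atTop (nhds 0) := by
  have hSm : ∀ k, Measurable fun ω => ∑ i ∈ Finset.range k, Y (T^[i] ω) := fun k =>
    Finset.measurable_sum _ fun i _ => hYm.comp (hT.iterate i).measurable
  have hlim : ∀ᵐ ω ∂P, Tendsto (fun k : ℕ => ∑ i ∈ Finset.range k, Y (T^[i] ω)) atTop atTop := by
    filter_upwards [hYhat, hYhatpos] with ω h1 h2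
    exact tendsto_atTop_of_tendsto_div_natCast h2 h1
  have hYpos : ∀ᵐ ω ∂P, 0 < Y ω := by
    filter_upwards [ae_lt_top hYm.ennreal_ofReal.inv hYinv.ne] with ω hω
    simpa using hω
  have hhat : AEMeasurable Yhat P := aemeasurable_of_tendsto_metrizable_ae atTop
    (fun k => ((hSm k).div_const _).aemeasurable) hYhat
  have he := ENNReal.Tendsto.const_mul (a := 4) (tendsto_lintegral_inv_tail hYm hYpos hYinv)
    (Or.inr (by simp))
  rw [mul_zero] at he
  refine tendsto_lintegral_abs_sub_of_excess (fun t => ?_) hhat.inv (fun t ht ω => by positivity)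
    ?_ he fun t ht K hK => lintegral_renewal_excess_le hT hYm hY0 hYpos hlim ht hK
  · refine AEMeasurable.div_const ?_ t
    refine ⟨fun ω => (∑' k : ℕ, if ∑ i ∈ Finset.range (k + 1), Y (T^[i] ω) ≤ t then 1 else 0 :
      ENNReal).toReal, ?_, ?_⟩
    · exact (Measurable.tsum fun k => Measurable.ite
        (measurableSet_le (hSm _) measurable_const) measurable_const measurable_const).ennreal_toReal
    · filter_upwards [hlim] with ω hω
      rw [← natCast_sSup_eq_tsum (monotone_birkhoff_sum hY0 ω) hω t, ENNReal.toReal_natCast]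
  · filter_upwards [hYhat, hYhatpos] with ω h1 h2
    exact tendsto_sSup_div (monotone_birkhoff_sum hY0 ω) h2 h1

/-- Krengel–Röttger–Wacker. Let `T` preserve the probability measure `P`,
let `Y ≥ 0` be integrable with `E(1/Y) < ∞`, set `Y_k := Y ∘ T^{k-1}`,
`S_k := Y_1 + ⋯ + Y_k` and `N_t := sup{k ≥ 1 : S_k ≤ t}`, and let `Ŷ = lim_k S_k/k`
(which exists a.s. by Birkhoff's theorem and is a.s. strictly positive). Then
`N_t/t → 1/Ŷ` in `L¹`-norm as `t → ∞`. -/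
theorem renewal_counting_L1_convergence
    {Ω : Type*} [MeasurableSpace Ω] (P : Measure Ω) [IsProbabilityMeasure P]
    (T : Ω → Ω) (hT : MeasurePreserving T P P)
    (Y : Ω → ℝ) (hY0 : ∀ ω, 0 ≤ Y ω) (hYint : Integrable Y P)
    (hYinv : ∫⁻ ω, (ENNReal.ofReal (Y ω))⁻¹ ∂P < ⊤)
    (Yhat : Ω → ℝ)
    (hYhat : ∀ᵐ ω ∂P, Tendsto
      (fun k : ℕ => (∑ i ∈ Finset.range k, Y (T^[i] ω)) / (k : ℝ)) atTop (nhds (Yhat ω)))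
    (hYhatpos : ∀ᵐ ω ∂P, 0 < Yhat ω) :
    Tendsto
      (fun t : ℝ => ∫ ω,
        |((sSup {k : ℕ | 0 < k ∧ ∑ i ∈ Finset.range k, Y (T^[i] ω) ≤ t} : ℕ) : ℝ) / t -
          (Yhat ω)⁻¹| ∂P)
      atTop (nhds 0) := by
  obtain ⟨Z, hZm, hYZ⟩ := hYint.aemeasurable
  set Y' : Ω → ℝ := fun ω => max (Z ω) 0 with hY'
  have hYY' : Y =ᵐ[P] Y' := by
    filter_upwards [hYZ] with ω hω
    simp only [hY', ← hω, max_eq_left (hY0 ω)]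
  have hsum : ∀ᵐ ω ∂P, ∀ k : ℕ, ∑ i ∈ Finset.range k, Y (T^[i] ω) =
      ∑ i ∈ Finset.range k, Y' (T^[i] ω) := by
    filter_upwards [ae_all_iff.2 fun i : ℕ =>
      (hT.iterate i).quasiMeasurePreserving.ae_eq_comp hYY'] with ω hω k
    exact Finset.sum_congr rfl fun i _ => hω i
  have hmain := tendsto_lintegral_renewal_of_measurable hT (Y := Y') (hZm.max measurable_const)
    (fun ω => le_max_right _ _) (Yhat := Yhat) ?_ ?_ hYhatpos
  · have h := (ENNReal.tendsto_toReal ENNReal.zero_ne_top).comp hmain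
    rw [ENNReal.toReal_zero] at h
    refine squeeze_zero (fun t => integral_nonneg fun ω => abs_nonneg _) (fun t => ?_) h
    calc _ = ∫ ω, |((sSup {k : ℕ | 0 < k ∧ ∑ i ∈ Finset.range k, Y' (T^[i] ω) ≤ t} : ℕ) : ℝ) / t -
          (Yhat ω)⁻¹| ∂P := by
          refine integral_congr_ae ?_
          filter_upwards [hsum] with ω hω
          simp only [hω]
      _ ≤ _ := by
          refine (Real.le_norm_self _).trans ((norm_integral_le_lintegral_norm _).trans_eq ?_)
          simp only [Real.norm_eq_abs, abs_abs, Function.comp]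
  · exact (lintegral_congr_ae (hYY'.fun_comp fun y => (ENNReal.ofReal y)⁻¹)).symm.trans_lt hYinv
  · filter_upwards [hYhat, hsum] with ω h1 h2
    simpa only [h2] using h1
end
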